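/- arXiv:2406.05632 — 7 statements merged into one kernel-verified Lean document; each statement's English description precedes it below -/
import Mathlib

section
/- The discounted value function V_β is nondecreasing: for all integers 1 ≤ Δ ≤ Δ', V_β(Δ) ≤ V_β(Δ'). -/
/-! The same sensing sequence is applied from both initial ages. The resulting ages are ordered at
every time (`aoiTraj_mono`), so by monotonicity of `U` the discounted costs are ordered term by
term, and hence so are their infima over all sensing sequences. -/

open scoped ENNReal

/-- Age-of-information trajectory from initial age `Δ₀` under sensing sequence `δ`. -/
def aoiTraj (Δ₀ : ℕ) (δ : ℕ → Bool) : ℕ → ℕ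
  | 0 => Δ₀
  | k + 1 => if δ k then 1 else aoiTraj Δ₀ δ k + 1

/-- β-discounted cost of the sensing sequence `δ` from initial age `Δ₀`,
valued in `[0,∞]`. -/
noncomputable def discCost (β lam : ℝ) (U : ℕ → ℝ) (Δ₀ : ℕ) (δ : ℕ → Bool) : ℝ≥0∞ :=
  ∑' k : ℕ, ENNReal.ofReal (β ^ k * (U (aoiTraj Δ₀ δ k) + lam * (if δ k then 1 else 0)))

/-- Discounted value function: infimum of the discounted cost over all sensing
sequences. -/
noncomputable def valueFn (β lam : ℝ) (U : ℕ → ℝ) (Δ₀ : ℕ) : ℝ≥0∞ :=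
  ⨅ δ : ℕ → Bool, discCost β lam U Δ₀ δ

/-- Under a fixed sensing sequence, a smaller initial age never leads to a larger age later on:
both trajectories grow in parallel until the first sensing time and coincide afterwards. -/
theorem aoiTraj_mono (δ : ℕ → Bool) {a b : ℕ} (hab : a ≤ b) (k : ℕ) :
    aoiTraj a δ k ≤ aoiTraj b δ k := by
  induction k with
  | zero => exact hab
  | succ k ih =>
    simp only [aoiTraj]
    split <;> omega

theorem value_monotone
    (β lam : ℝ) (hβ : β ∈ Set.Ioo (0 : ℝ) 1) (hlam : 0 ≤ lam)
    (U : ℕ → ℝ) (hU0 : ∀ n, 0 ≤ U n) (hUmono : Monotone U)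
    (Δ Δ' : ℕ) (hΔ : 1 ≤ Δ) (hΔΔ' : Δ ≤ Δ') :
    valueFn β lam U Δ ≤ valueFn β lam U Δ' := by
  refine iInf_mono fun δ => ENNReal.tsum_le_tsum fun k => ENNReal.ofReal_le_ofReal ?_
  have hpow : 0 ≤ β ^ k := pow_nonneg hβ.1.le k
  have hstage : U (aoiTraj Δ δ k) ≤ U (aoiTraj Δ' δ k) := hUmono (aoiTraj_mono δ hΔΔ' k)
  gcongr
end

section
/- The long-run average cost of the threshold-η policy equals the cycle average: for every integer η ≥ 1 and every initial age Δ₀ ≥ 1, the trajectory generated in closed loop by δ_k = 1 if Δ_k ≥ η and δ_k = 0 otherwise satisfies lim_{m→∞} (1/m) Σ_{k=0}^{m−1} (U(Δ_k) + λ δ_k) = (Σ_{ℓ=1}^{η} U(ℓ) + λ)/η. -/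
/-!
The cost is averaged with a bias function solving the Poisson equation of the closed loop: with
`g = (∑ ℓ ∈ Icc 1 η, U ℓ + lam) / η`, the function `h = thBias` is such that the cost incurred at age `a`
is `g + h a - h b`, where `b` is the next age (`thBias_step`). The total cost over `m` steps then
telescopes to `m * g + h Δ₀ - h Δ_m`. The ages never exceed `max Δ₀ η` (`thTraj_le`), so `h Δ_m` is
bounded and vanishes after division by `m`.
-/

open Filter

/-- Closed-loop age-of-information trajectory of the threshold-`η` policy
(`sense iff the current age is at least η`) from initial age `Δ₀`:
`Δ_{k+1} = 1` if `δ_k = 1` (i.e. `Δ_k ≥ η`) and `Δ_{k+1} = Δ_k + 1` otherwise. -/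
def thTraj (η Δ₀ : ℕ) : ℕ → ℕ
  | 0 => Δ₀
  | k + 1 => if η ≤ thTraj η Δ₀ k then 1 else thTraj η Δ₀ k + 1

/-- Bias (relative value) function of the threshold-`η` policy with average cost `g`. Below the
threshold it accumulates `g - U ℓ`; at or above the threshold it is the value prescribed by a
single sensing step to age `1`, the constant `g - U 0` being the accumulated sum at age `1`. -/
noncomputable def thBias (lam : ℝ) (U : ℕ → ℝ) (η : ℕ) (g : ℝ) (a : ℕ) : ℝ :=
  if η ≤ a then U a + lam - g + (g - U 0) else ∑ ℓ ∈ Finset.range a, (g - U ℓ)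

/-- For `g` the cycle average, the two branches of `thBias` agree at age `η`, hence the
accumulated-sum formula holds up to and including the threshold. -/
lemma thBias_of_le (lam : ℝ) (U : ℕ → ℝ) (η : ℕ) (g : ℝ)
    (hg : g * η = (∑ ℓ ∈ Finset.Icc 1 η, U ℓ) + lam) (a : ℕ) (ha : a ≤ η) :
    thBias lam U η g a = ∑ ℓ ∈ Finset.range a, (g - U ℓ) := by
  unfold thBias
  split_ifs with h
  · obtain rfl : a = η := le_antisymm ha h
    have h1 : ∑ ℓ ∈ Finset.range (a + 1), U ℓ = (∑ ℓ ∈ Finset.Icc 1 a, U ℓ) + U 0 := by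
      rw [Finset.sum_range_succ', Finset.range_eq_Ico, Finset.sum_Ico_add' U 0 a 1]
      rfl
    rw [Finset.sum_range_succ] at h1
    rw [Finset.sum_sub_distrib, Finset.sum_const, Finset.card_range, nsmul_eq_mul]
    linarith
  · rfl

/-- The Poisson equation for the threshold policy. -/
lemma thBias_step (lam : ℝ) (U : ℕ → ℝ) (η : ℕ) (hη : 1 ≤ η) (g : ℝ)
    (hg : g * η = (∑ ℓ ∈ Finset.Icc 1 η, U ℓ) + lam) (a : ℕ) :
    U a + lam * (if η ≤ a then 1 else 0) =
      g + thBias lam U η g a - thBias lam U η g (if η ≤ a then 1 else a + 1) := by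
  by_cases h : η ≤ a
  · rw [if_pos h, if_pos h, thBias_of_le lam U η g hg 1 hη, thBias, if_pos h]
    simp
  · rw [if_neg h, if_neg h, thBias_of_le lam U η g hg a (by omega),
      thBias_of_le lam U η g hg (a + 1) (by omega), Finset.sum_range_succ]
    ring

lemma thTraj_le (η Δ₀ : ℕ) (hη : 1 ≤ η) (k : ℕ) : thTraj η Δ₀ k ≤ max Δ₀ η := by
  cases k with
  | zero => exact le_max_left _ _
  | succ k =>
    rw [thTraj]
    split_ifs <;> omega

theorem threshold_policy_average_cost
    (lam : ℝ) (hlam : 0 ≤ lam)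
    (U : ℕ → ℝ) (hU0 : ∀ n, 0 ≤ U n) (hUmono : Monotone U)
    (η : ℕ) (hη : 1 ≤ η) (Δ₀ : ℕ) (hΔ₀ : 1 ≤ Δ₀) :
    Tendsto
      (fun m : ℕ =>
        (∑ k ∈ Finset.range m,
          (U (thTraj η Δ₀ k) + lam * (if η ≤ thTraj η Δ₀ k then 1 else 0))) / m)
      atTop (nhds (((∑ ℓ ∈ Finset.Icc 1 η, U ℓ) + lam) / η)) := by
  set g : ℝ := ((∑ ℓ ∈ Finset.Icc 1 η, U ℓ) + lam) / η with hgdef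
  have hg : g * η = (∑ ℓ ∈ Finset.Icc 1 η, U ℓ) + lam :=
    div_mul_cancel₀ _ (by positivity)
  have hsum : ∀ m : ℕ, ∑ k ∈ Finset.range m,
      (U (thTraj η Δ₀ k) + lam * (if η ≤ thTraj η Δ₀ k then 1 else 0)) =
      m * g + (thBias lam U η g Δ₀ - thBias lam U η g (thTraj η Δ₀ m)) := by
    intro m
    induction m with
    | zero => simp [thTraj]
    | succ m ih =>
      rw [Finset.sum_range_succ, ih, thBias_step lam U η hη g hg, thTraj]
      push_cast
      ring
  -- The ages take finitely many values, so the sum of `|thBias|` over those values is a uniform bound.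
  have hbound : ∀ m, |thBias lam U η g (thTraj η Δ₀ m)| ≤
      ∑ a ∈ Finset.range (max Δ₀ η + 1), |thBias lam U η g a| := fun m =>
    Finset.single_le_sum (f := fun a => |thBias lam U η g a|) (fun _ _ => abs_nonneg _)
      (Finset.mem_range.2 (Nat.lt_succ_of_le (thTraj_le η Δ₀ hη m)))
  have hrem : Tendsto (fun m : ℕ =>
      (thBias lam U η g Δ₀ - thBias lam U η g (thTraj η Δ₀ m)) / (m : ℝ)) atTop (nhds 0) := by
    refine squeeze_zero_norm (fun m => ?_) (tendsto_const_div_atTop_nhds_zero_nat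
      (|thBias lam U η g Δ₀| + ∑ a ∈ Finset.range (max Δ₀ η + 1), |thBias lam U η g a|))
    rw [norm_div, Real.norm_natCast, Real.norm_eq_abs]
    gcongr
    exact (abs_sub _ _).trans (add_le_add le_rfl (hbound m))
  have hlim := hrem.const_add g
  rw [add_zero] at hlim
  refine hlim.congr' ?_
  filter_upwards [eventually_ge_atTop 1] with m hm
  have hm0 : (m : ℝ) ≠ 0 := by positivity
  rw [hsum m, add_div, mul_div_cancel_left₀ g hm0]
end

section
/- Average-cost Bellman equation: suppose additionally that U(Δ) → ∞ as Δ → ∞. Then there exist a real constant V̄ and a nonnegative function f : {1,2,...} → ℝ with f(1) = 0 such that for every integer Δ ≥ 1, V̄ + f(Δ) = U(Δ) + min( λ + f(1), f(Δ+1) ), and moreover V̄ = min over integers η ≥ 1 of the cycle average g(η) = (Σ_{ℓ=1}^{η} U(ℓ) + λ)/η. -/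
/-!
Write `A n = U 1 + ⋯ + U n`. The cycle average `(A n + lam) / n` attains its minimum `V`: once `U`
has exceeded the first cycle average, further terms cannot bring the average below the minimum
already reached. Comparing a minimizer `η` with its neighbours `η - 1` and `η + 1` gives
`U η ≤ V ≤ U (η + 1)`, so sensing exactly when `Δ ≥ η` is optimal. The relative value function is
the cost, in excess of `V` per step, of following this threshold policy from age `Δ`:
`f Δ = (Δ - 1) V - A (Δ - 1)` for `Δ ≤ η` and `f Δ = U Δ - V + lam` for `Δ > η`.
Monotonicity of `U` gives `f ≥ 0`, and minimality of `V` shows that not sensing is optimal below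
the threshold.
-/

open Filter

/-- The cycle average attains its minimum `V` at some `η`; stated without division. -/
lemma exists_min_cycle_average (lam : ℝ) (U A : ℕ → ℝ) (hA : ∀ n, A (n + 1) = A n + U (n + 1))
    (hUinf : Tendsto U atTop atTop) :
    ∃ (V : ℝ) (η : ℕ), 1 ≤ η ∧ A η + lam = η * V ∧ ∀ m : ℕ, 1 ≤ m → m * V ≤ A m + lam := by
  obtain ⟨N, hN⟩ := (hUinf.eventually_ge_atTop (A 1 + lam)).exists_forall_of_atTop
  obtain ⟨η, hη, hmin⟩ := Finset.exists_min_image (Finset.Icc 1 (N + 1))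
    (fun n : ℕ => (A n + lam) / n) ⟨1, by simp⟩
  have hη1 : 1 ≤ η := (Finset.mem_Icc.1 hη).1
  have hηpos : (0 : ℝ) < η := by exact_mod_cast hη1
  refine ⟨(A η + lam) / η, η, hη1, by field_simp, ?_⟩
  intro m hm
  induction m, hm using Nat.le_induction with
  | base =>
    have h := hmin 1 (by simp)
    simpa using h
  | succ m hm ih =>
    by_cases h : m + 1 ≤ N + 1
    · have h2 := hmin (m + 1) (by simp; omega)
      have hpos : (0 : ℝ) < ((m + 1 : ℕ) : ℝ) := by positivity
      have h3 := (le_div_iff₀ hpos).1 h2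
      linarith
    · have h1 := hmin 1 (by simp)
      have h2 := hN (m + 1) (by omega)
      simp only [Nat.cast_one, div_one] at h1
      rw [hA]
      push_cast
      linarith

theorem average_cost_bellman
    (lam : ℝ) (hlam : 0 ≤ lam)
    (U : ℕ → ℝ) (hU0 : ∀ n, 0 ≤ U n) (hUmono : Monotone U)
    (hUinf : Tendsto U atTop atTop) :
    ∃ (Vbar : ℝ) (f : ℕ → ℝ),
      (∀ Δ : ℕ, 1 ≤ Δ → 0 ≤ f Δ) ∧ f 1 = 0 ∧
      (∀ Δ : ℕ, 1 ≤ Δ → Vbar + f Δ = U Δ + min (lam + f 1) (f (Δ + 1))) ∧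
      (∃ η : ℕ, 1 ≤ η ∧ Vbar = ((∑ ℓ ∈ Finset.Icc 1 η, U ℓ) + lam) / η) ∧
      (∀ m : ℕ, 1 ≤ m → Vbar ≤ ((∑ ℓ ∈ Finset.Icc 1 m, U ℓ) + lam) / m) := by
  obtain ⟨A, hAdef⟩ : ∃ A : ℕ → ℝ, ∀ n, A n = ∑ ℓ ∈ Finset.Icc 1 n, U ℓ := ⟨_, fun _ => rfl⟩
  have hA : ∀ n, A (n + 1) = A n + U (n + 1) := fun n => by
    rw [hAdef, hAdef, Finset.sum_Icc_succ_top (by omega)]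
  have hA0 : A 0 = 0 := by simp [hAdef]
  simp only [← hAdef]
  obtain ⟨V, η, hη, hV, hmin⟩ := exists_min_cycle_average lam U A hA hUinf
  obtain ⟨p, rfl⟩ : ∃ p, η = p + 1 := ⟨η - 1, by omega⟩
  -- At `n = 0` the inequality `n * V ≤ A n + lam` is `0 ≤ lam`; it covers the case `η = 1`.
  have hmin0 : ∀ n : ℕ, (n : ℝ) * V ≤ A n + lam := by
    intro n
    rcases Nat.eq_zero_or_pos n with rfl | hn
    · simpa [hA0] using hlam
    · exact hmin n hn
  have hUle : U (p + 1) ≤ V := by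
    have h1 := hmin0 p
    have h2 := hA p
    push_cast at hV
    linarith
  have hUge : V ≤ U (p + 2) := by
    have h1 := hmin0 (p + 2)
    have h2 := hA (p + 1)
    push_cast at hV h1
    linarith
  have hAle : ∀ n, n ≤ p + 1 → A n ≤ n * V := by
    intro n
    induction n with
    | zero => simp [hA0]
    | succ n ih =>
      intro hn
      have h1 := ih (by omega)
      have h2 := hUmono hn
      rw [hA]
      push_cast
      linarith
  let f : ℕ → ℝ := fun d =>
    if d ≤ p + 1 then ((d : ℝ) - 1) * V - A (d - 1) else U d - V + lam
  have hf1 : f 1 = 0 := by simp [f, hA0]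
  have hlow : ∀ k, k ≤ p → f (k + 1) = k * V - A k := by
    intro k hk
    simp [f, hk]
  have hhigh : ∀ k, p < k → f (k + 1) = U (k + 1) - V + lam := by
    intro k hk
    simp [f, hk]
  have hge : ∀ k, p < k → lam ≤ f (k + 1) := by
    intro k hk
    have := hUmono (show p + 2 ≤ k + 1 by omega)
    rw [hhigh k hk]
    linarith
  refine ⟨V, f, ?_, hf1, ?_, ⟨p + 1, hη, ?_⟩, ?_⟩
  · intro d hd
    obtain ⟨k, rfl⟩ : ∃ k, d = k + 1 := ⟨d - 1, by omega⟩
    rcases le_or_gt k p with hk | hk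
    · rw [hlow k hk]
      linarith [hAle k (by omega)]
    · exact hlam.trans (hge k hk)
  · intro d hd
    obtain ⟨k, rfl⟩ : ∃ k, d = k + 1 := ⟨d - 1, by omega⟩
    rw [hf1, add_zero]
    rcases lt_trichotomy k p with hk | rfl | hk
    · have h1 := hmin0 (k + 1)
      have h2 := hA k
      rw [hlow k hk.le, hlow (k + 1) hk, min_eq_right (by linarith)]
      push_cast
      linarith
    · have h2 := hA k
      rw [hlow k le_rfl, min_eq_left (hge (k + 1) (by omega))]
      push_cast at hV
      linarith
    · rw [hhigh k hk, min_eq_left (hge (k + 1) (by omega))]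
      ring
  · rw [hV]
    have : ((p + 1 : ℕ) : ℝ) ≠ 0 := by positivity
    field_simp
  · intro m hm
    have hpos : (0 : ℝ) < m := by exact_mod_cast hm
    rw [le_div_iff₀ hpos]
    linarith [hmin m hm]
end

section
/- Characterization of the optimal threshold: assume λ > 0, and let η ≥ 1 be an integer. Then η minimizes the cycle average g over all positive integers (i.e., g(η) ≤ g(m) for every integer m ≥ 1) if and only if U(η) ≤ g(η) ≤ U(η+1). -/
/-!
Write `g` for the cycle average at `η` and `D m = ∑_{ℓ=1}^m U ℓ + lam - m * g`. Then `D η = 0`,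
and for `m ≥ 1` the inequality `g ≤ g(m)` says `0 ≤ D m`; also `D 0 = lam > 0`. Hence `η` is optimal
iff `D` is nonnegative everywhere. Since `D (m + 1) - D m = U (m + 1) - g` is nondecreasing in `m`,
`D` is discretely convex, so it is minimal at its zero `η` iff its two neighbouring increments
satisfy `U η - g ≤ 0 ≤ U (η + 1) - g`.
-/

theorem optimal_threshold_characterization
    (lam : ℝ) (hlam : 0 < lam)
    (U : ℕ → ℝ) (hU0 : ∀ n, 0 ≤ U n) (hUmono : Monotone U)
    (η : ℕ) (hη : 1 ≤ η) :
    (∀ m : ℕ, 1 ≤ m →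
        ((∑ ℓ ∈ Finset.Icc 1 η, U ℓ) + lam) / η ≤ ((∑ ℓ ∈ Finset.Icc 1 m, U ℓ) + lam) / m) ↔
      (U η ≤ ((∑ ℓ ∈ Finset.Icc 1 η, U ℓ) + lam) / η ∧
        ((∑ ℓ ∈ Finset.Icc 1 η, U ℓ) + lam) / η ≤ U (η + 1)) := by
  have hη0 : (η : ℝ) ≠ 0 := by positivity
  obtain ⟨g, hg⟩ : ∃ g, g = ((∑ ℓ ∈ Finset.Icc 1 η, U ℓ) + lam) / η := ⟨_, rfl⟩
  rw [← hg]
  obtain ⟨D, hD⟩ : ∃ D : ℕ → ℝ, ∀ m, D m = (∑ ℓ ∈ Finset.Icc 1 m, U ℓ) + lam - m * g :=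
    ⟨_, fun _ => rfl⟩
  have hDη : D η = 0 := by
    rw [hD, hg]
    field_simp
    ring
  have hstep : ∀ m, D (m + 1) = D m + (U (m + 1) - g) := by
    intro m
    rw [hD, hD, Finset.sum_Icc_succ_top (by omega)]
    push_cast
    ring
  have hD0 : D 0 = lam := by simp [hD]
  have hiff : ∀ m : ℕ, 1 ≤ m → (g ≤ ((∑ ℓ ∈ Finset.Icc 1 m, U ℓ) + lam) / m ↔ 0 ≤ D m) := by
    intro m hm
    have hm0 : (0 : ℝ) < m := by positivity
    rw [le_div_iff₀ hm0, hD, sub_nonneg, mul_comm]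
  constructor
  · intro h
    obtain ⟨k, rfl⟩ : ∃ k, η = k + 1 := ⟨η - 1, by omega⟩
    constructor
    · have hk : 0 ≤ D k := by
        -- for `η = 1` the left neighbour is `0`, where `D` takes the value `lam`
        rcases Nat.eq_zero_or_pos k with rfl | hk
        · rw [hD0]
          exact hlam.le
        · exact (hiff k hk).1 (h k hk)
      linarith [hstep k]
    · have := (hiff (k + 1 + 1) (by omega)).1 (h _ (by omega))
      linarith [hstep (k + 1)]
  · rintro ⟨h1, h2⟩ m hm
    rw [hiff m hm]
    rcases le_total η m with h | h
    · clear hm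
      induction m, h using Nat.le_induction with
      | base => exact hDη.ge
      | succ n hn ih =>
        have : U (η + 1) ≤ U (n + 1) := hUmono (by omega)
        linarith [hstep n]
    · clear hm
      induction h using Nat.decreasingInduction with
      | self => exact hDη.ge
      | of_succ n hn ih =>
        have : U (n + 1) ≤ U η := hUmono (by omega)
        linarith [hstep n]
end

section
/- Existence of the interpolated threshold equation: let U : ℝ → ℝ be continuous and nondecreasing on [0,∞) with U ≥ 0, let λ ≥ 0, and suppose the integer η ≥ 1 minimizes the cycle average g(m) = (Σ_{ℓ=1}^{m} U(ℓ) + λ)/m over all positive integers m. Then there exists θ ∈ [0,1] such that U(η + θ) · η = Σ_{ℓ=1}^{η} U(ℓ) + λ. -/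
/-!
Write `S m` for the sum of `U 1, …, U m` plus `lam`. Comparing the minimal average `S η / η` with
`S (η + 1) / (η + 1)` gives `S η ≤ U (η + 1) * η`, and comparing it with `S (η - 1) / (η - 1)` gives
`U η * η ≤ S η` (for `η = 1` the latter is just `0 ≤ lam`). The intermediate value theorem for
`θ ↦ U (η + θ) * η` on `[0, 1]` then gives the claim.
-/

theorem interpolated_threshold_equation
    (U : ℝ → ℝ) (hUc : ContinuousOn U (Set.Ici (0 : ℝ)))
    (hUmono : MonotoneOn U (Set.Ici (0 : ℝ)))
    (hU0 : ∀ x : ℝ, 0 ≤ x → 0 ≤ U x)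
    (lam : ℝ) (hlam : 0 ≤ lam)
    (η : ℕ) (hη : 1 ≤ η)
    (hmin : ∀ m : ℕ, 1 ≤ m →
      ((∑ ℓ ∈ Finset.Icc 1 η, U ℓ) + lam) / η ≤ ((∑ ℓ ∈ Finset.Icc 1 m, U ℓ) + lam) / m) :
    ∃ θ ∈ Set.Icc (0 : ℝ) 1,
      U ((η : ℝ) + θ) * η = (∑ ℓ ∈ Finset.Icc 1 η, U ℓ) + lam := by
  have hpos : (0 : ℝ) < η := by exact_mod_cast hη
  have upper : (∑ ℓ ∈ Finset.Icc 1 η, U ℓ) + lam ≤ U ((η : ℝ) + 1) * η := by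
    have h := hmin (η + 1) (by omega)
    rw [Finset.sum_Icc_succ_top (by omega), div_le_div_iff₀ hpos (by positivity)] at h
    push_cast at h
    linarith
  have lower : U ((η : ℝ) + 0) * η ≤ (∑ ℓ ∈ Finset.Icc 1 η, U ℓ) + lam := by
    obtain ⟨k, rfl⟩ : ∃ k, η = k + 1 := ⟨η - 1, by omega⟩
    -- The average over zero terms is not covered by minimality, so `η = 1` is separate.
    rcases Nat.eq_zero_or_pos k with rfl | hk
    · simpa using hlam
    · have hk' : (0 : ℝ) < k := by exact_mod_cast hk
      have h := hmin k hk
      rw [Finset.sum_Icc_succ_top (by omega), div_le_div_iff₀ hpos hk'] at h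
      rw [Finset.sum_Icc_succ_top (by omega)]
      push_cast at h ⊢
      rw [add_zero]
      linarith
  have hcont : ContinuousOn (fun θ : ℝ => U ((η : ℝ) + θ) * η) (Set.Icc 0 1) := by
    refine ContinuousOn.mul (hUc.comp (by fun_prop) ?_) continuousOn_const
    intro θ hθ
    exact add_nonneg hpos.le hθ.1
  exact intermediate_value_Icc zero_le_one hcont ⟨lower, upper⟩
end

section
/- Integral completion of squares along a trajectory: let Ã, Q̃, P be n×n real matrices, B₁ an n×m real matrix, R₁ a symmetric invertible m×m real matrix, with P symmetric satisfying Ãᵀ P + P Ã + Q̃ − P B₁ R₁⁻¹ B₁ᵀ P = 0. Let u : ℝ → ℝᵐ be continuous and x : ℝ → ℝⁿ be differentiable with x'(t) = Ã x(t) + B₁ u(t) for all t. Then for every T ≥ 0, ∫₀ᵀ ( x(t)ᵀ Q̃ x(t) + u(t)ᵀ R₁ u(t) ) dt = x(0)ᵀ P x(0) − x(T)ᵀ P x(T) + ∫₀ᵀ ( u(t) + R₁⁻¹ B₁ᵀ P x(t) )ᵀ R₁ ( u(t) + R₁⁻¹ B₁ᵀ P x(t) ) dt. -/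
/-!
The function `V t = x t ⬝ᵥ P *ᵥ x t` has derivative `x' ⬝ᵥ P *ᵥ x + x ⬝ᵥ P *ᵥ x'`. Substituting the
state equation and the Riccati equation turns `V' + x ⬝ᵥ Q *ᵥ x + u ⬝ᵥ R *ᵥ u` into the square
`(u + K x) ⬝ᵥ R *ᵥ (u + K x)` with `K = R⁻¹ Bᵀ P` (`completion_of_squares_pointwise`). Integrating
this identity over `[0, T]` with the fundamental theorem of calculus gives the theorem.
-/

open Matrix

/-- Completion of squares at a single time. With `K = R⁻¹ Bᵀ P`, the identity `R K = Bᵀ P` handles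
the cross terms, and the term quadratic in `K x` is the quadratic part of the Riccati equation. -/
lemma completion_of_squares_pointwise {n m : ℕ}
    (A Q P : Matrix (Fin n) (Fin n) ℝ) (B : Matrix (Fin n) (Fin m) ℝ)
    (R : Matrix (Fin m) (Fin m) ℝ) (hRsym : Rᵀ = R) (hR : IsUnit R) (hPsym : Pᵀ = P)
    (hARE : Aᵀ * P + P * A + Q - P * B * R⁻¹ * Bᵀ * P = 0)
    (x : Fin n → ℝ) (u : Fin m → ℝ) :
    x ⬝ᵥ (Q *ᵥ x) + u ⬝ᵥ (R *ᵥ u) +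
        ((A *ᵥ x + B *ᵥ u) ⬝ᵥ (P *ᵥ x) + x ⬝ᵥ (P *ᵥ (A *ᵥ x + B *ᵥ u))) =
      (u + (R⁻¹ * Bᵀ * P) *ᵥ x) ⬝ᵥ (R *ᵥ (u + (R⁻¹ * Bᵀ * P) *ᵥ x)) := by
  have hRK : R * (R⁻¹ * Bᵀ * P) = Bᵀ * P := by
    rw [Matrix.mul_assoc R⁻¹, Matrix.mul_nonsing_inv_cancel_left _ _ ((isUnit_iff_isUnit_det R).1 hR)]
  -- Moving a matrix across the dot product.
  have adj : ∀ {k l : ℕ} (M : Matrix (Fin k) (Fin l) ℝ) (v : Fin l → ℝ) (w : Fin k → ℝ),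
      (M *ᵥ v) ⬝ᵥ w = v ⬝ᵥ (Mᵀ *ᵥ w) := by
    intro k l M v w
    rw [dotProduct_comm, dotProduct_mulVec, dotProduct_comm, mulVec_transpose]
  have hQ : x ⬝ᵥ ((Aᵀ * P + P * A + Q) *ᵥ x) = x ⬝ᵥ ((P * B * R⁻¹ * Bᵀ * P) *ᵥ x) := by
    rw [sub_eq_zero.1 hARE]
  set K := R⁻¹ * Bᵀ * P with hK
  have hPBK : P * B * R⁻¹ * Bᵀ * P = P * B * K := by simp only [hK, Matrix.mul_assoc]
  have e1 : R *ᵥ (K *ᵥ x) = Bᵀ *ᵥ (P *ᵥ x) := by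
    rw [mulVec_mulVec, hRK, mulVec_mulVec]
  have e2 : (K *ᵥ x) ⬝ᵥ (R *ᵥ u) = u ⬝ᵥ (Bᵀ *ᵥ (P *ᵥ x)) := by
    rw [dotProduct_comm, adj, hRsym, e1]
  have e3 : (K *ᵥ x) ⬝ᵥ (Bᵀ *ᵥ (P *ᵥ x)) = x ⬝ᵥ ((P * B * K) *ᵥ x) := by
    rw [← adj, dotProduct_comm, adj, hPsym, mulVec_mulVec, mulVec_mulVec, Matrix.mul_assoc]
  have e4 : x ⬝ᵥ (P *ᵥ (B *ᵥ u)) = u ⬝ᵥ (Bᵀ *ᵥ (P *ᵥ x)) := by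
    rw [← adj B, dotProduct_comm (B *ᵥ u), adj P, hPsym]
  rw [hPBK] at hQ
  simp only [add_mulVec, dotProduct_add, ← mulVec_mulVec (M := Aᵀ), ← mulVec_mulVec (N := A)] at hQ
  simp only [mulVec_add, dotProduct_add, add_dotProduct, e1, e2, e3, e4, adj A, adj B]
  linarith

lemma hasDerivAt_quadratic_form {n : ℕ} (P : Matrix (Fin n) (Fin n) ℝ)
    {x : ℝ → Fin n → ℝ} {x' : Fin n → ℝ} {t : ℝ} (hx : HasDerivAt x x' t) :
    HasDerivAt (fun s => x s ⬝ᵥ (P *ᵥ x s)) (x' ⬝ᵥ (P *ᵥ x t) + x t ⬝ᵥ (P *ᵥ x')) t := by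
  have hxi := hasDerivAt_pi.1 hx
  have hP : ∀ i, HasDerivAt (fun s => (P *ᵥ x s) i) ((P *ᵥ x') i) t := by
    intro i
    simp only [mulVec, dotProduct]
    exact HasDerivAt.fun_sum fun j _ => (hxi j).const_mul (P i j)
  simp only [dotProduct, ← Finset.sum_add_distrib]
  exact HasDerivAt.fun_sum fun i _ => (hxi i).mul (hP i)

theorem integral_completion_of_squares
    {n m : ℕ}
    (Atil Qtil P : Matrix (Fin n) (Fin n) ℝ)
    (B₁ : Matrix (Fin n) (Fin m) ℝ) (R₁ : Matrix (Fin m) (Fin m) ℝ)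
    (hR₁sym : R₁ᵀ = R₁) (hR₁ : IsUnit R₁) (hPsym : Pᵀ = P)
    (hARE : Atilᵀ * P + P * Atil + Qtil - P * B₁ * R₁⁻¹ * B₁ᵀ * P = 0)
    (u : ℝ → Fin m → ℝ) (hu : Continuous u)
    (x : ℝ → Fin n → ℝ)
    (hx : ∀ t : ℝ, HasDerivAt x (Atil *ᵥ x t + B₁ *ᵥ u t) t)
    (T : ℝ) (hT : 0 ≤ T) :
    ∫ t in (0 : ℝ)..T, (x t ⬝ᵥ (Qtil *ᵥ x t) + u t ⬝ᵥ (R₁ *ᵥ u t)) =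
      x 0 ⬝ᵥ (P *ᵥ x 0) - x T ⬝ᵥ (P *ᵥ x T) +
        ∫ t in (0 : ℝ)..T,
          ((u t + (R₁⁻¹ * B₁ᵀ * P) *ᵥ x t) ⬝ᵥ (R₁ *ᵥ (u t + (R₁⁻¹ * B₁ᵀ * P) *ᵥ x t))) := by
  have hxc : Continuous x := continuous_iff_continuousAt.2 fun t => (hx t).continuousAt
  have hV : Continuous fun t => (Atil *ᵥ x t + B₁ *ᵥ u t) ⬝ᵥ (P *ᵥ x t) +
      x t ⬝ᵥ (P *ᵥ (Atil *ᵥ x t + B₁ *ᵥ u t)) := by fun_prop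
  have hL : Continuous fun t => x t ⬝ᵥ (Qtil *ᵥ x t) + u t ⬝ᵥ (R₁ *ᵥ u t) := by fun_prop
  have hFTC := intervalIntegral.integral_eq_sub_of_hasDerivAt (a := 0) (b := T)
    (fun t _ => hasDerivAt_quadratic_form P (hx t)) (hV.intervalIntegrable 0 T)
  simp only [← completion_of_squares_pointwise Atil Qtil P B₁ R₁ hR₁sym hR₁ hPsym hARE]
  rw [intervalIntegral.integral_add (hL.intervalIntegrable 0 T) (hV.intervalIntegrable 0 T), hFTC]
  ring
end

section
/- Average-cost lower bound for arbitrary sensing sequences (average-cost optimality of the best threshold policy): let g* = inf over integers η ≥ 1 of g(η) = (Σ_{ℓ=1}^{η} U(ℓ) + λ)/η. Then for every initial age Δ₀ ≥ 1, every sensing sequence δ, and every integer m ≥ 1, the trajectory (Δ_k) from Δ₀ under δ satisfies Σ_{k=0}^{m−1} ( U(Δ_k) + λ δ_k ) ≥ m · g* − λ; consequently liminf_{m→∞} (1/m) Σ_{k=0}^{m−1} ( U(Δ_k) + λ δ_k ) ≥ g*, so no sensing sequence achieves a long-run average cost smaller than the infimum of the cycle averages of threshold policies. -/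
/-!
Write `g` for the infimum of the cycle averages, so that `s * g ≤ ∑_{ℓ=1}^s U ℓ + lam` for every
`s`. Cut the horizon at the sensing times. A completed cycle of `s` steps visits ages at least
`1, …, s` (the first one starts from an age `≥ 1`) and pays `lam` once, so by monotonicity of `U`
it costs at least `s * g`. The last, possibly unfinished, cycle of `s` steps has cost at least
`∑_{ℓ=1}^s U ℓ ≥ s * g - lam`. Hence the total is at least `m * g - lam`
(`cost_ge_of_cycle_bound`), and dividing by `m` and letting `m → ∞` gives the bound on the liminf.
-/

open Filter

/-- Here `s` is the number of steps since the last sensing time (or since time `0`): completed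
cycles are charged `g` per step, and the running cycle is charged `∑_{ℓ=1}^s U ℓ`. -/
lemma exists_running_cycle (lam : ℝ) (U : ℕ → ℝ) (hUmono : Monotone U)
    (Δ₀ : ℕ) (hΔ₀ : 1 ≤ Δ₀) (δ : ℕ → Bool) (g : ℝ)
    (hg : ∀ s : ℕ, s * g ≤ (∑ ℓ ∈ Finset.Icc 1 s, U ℓ) + lam) (m : ℕ) :
    ∃ s : ℕ, s + 1 ≤ aoiTraj Δ₀ δ m ∧
      ((m : ℝ) - s) * g + ∑ ℓ ∈ Finset.Icc 1 s, U ℓ ≤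
        ∑ k ∈ Finset.range m, (U (aoiTraj Δ₀ δ k) + lam * (if δ k then 1 else 0)) := by
  induction m with
  | zero => exact ⟨0, by simpa [aoiTraj] using hΔ₀, by simp⟩
  | succ m ih =>
    obtain ⟨s, hs, h⟩ := ih
    have hU := hUmono hs
    have hsum : ∑ ℓ ∈ Finset.Icc 1 (s + 1), U ℓ = ∑ ℓ ∈ Finset.Icc 1 s, U ℓ + U (s + 1) :=
      Finset.sum_Icc_succ_top (by omega) _
    rw [Finset.sum_range_succ]
    by_cases hd : δ m = true
    · refine ⟨0, by simp [aoiTraj, hd], ?_⟩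
      have hc := hg (s + 1)
      rw [hsum] at hc
      push_cast at hc ⊢
      simp only [hd, if_true, Finset.Icc_eq_empty_of_lt zero_lt_one, Finset.sum_empty]
      linarith
    · refine ⟨s + 1, by simpa [aoiTraj, hd] using hs, ?_⟩
      rw [hsum]
      push_cast
      simp only [hd, if_false, Bool.false_eq_true]
      linarith

lemma cost_ge_of_cycle_bound (lam : ℝ) (U : ℕ → ℝ) (hUmono : Monotone U)
    (Δ₀ : ℕ) (hΔ₀ : 1 ≤ Δ₀) (δ : ℕ → Bool) (g : ℝ)
    (hg : ∀ s : ℕ, s * g ≤ (∑ ℓ ∈ Finset.Icc 1 s, U ℓ) + lam) (m : ℕ) :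
    m * g - lam ≤
      ∑ k ∈ Finset.range m, (U (aoiTraj Δ₀ δ k) + lam * (if δ k then 1 else 0)) := by
  obtain ⟨s, -, h⟩ := exists_running_cycle lam U hUmono Δ₀ hΔ₀ δ g hg m
  linarith [hg s]

lemma mul_iInf_cycle_le (lam : ℝ) (hlam : 0 ≤ lam) (U : ℕ → ℝ) (hU0 : ∀ n, 0 ≤ U n) (s : ℕ) :
    s * (⨅ η : ℕ+, ((∑ ℓ ∈ Finset.Icc 1 (η : ℕ), U ℓ) + lam) / (η : ℝ)) ≤
      (∑ ℓ ∈ Finset.Icc 1 s, U ℓ) + lam := by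
  rcases Nat.eq_zero_or_pos s with rfl | hs
  · simpa using hlam
  · have hbdd : BddBelow (Set.range fun η : ℕ+ =>
        ((∑ ℓ ∈ Finset.Icc 1 (η : ℕ), U ℓ) + lam) / (η : ℝ)) := by
      refine ⟨0, ?_⟩
      rintro _ ⟨η, rfl⟩
      exact div_nonneg (add_nonneg (Finset.sum_nonneg fun i _ => hU0 i) hlam) (Nat.cast_nonneg _)
    have h := ciInf_le hbdd (⟨s, hs⟩ : ℕ+)
    have hs' : (0 : ℝ) < s := by exact_mod_cast hs
    rw [mul_comm]
    exact (le_div_iff₀ hs').mp h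

theorem average_cost_lower_bound
    (lam : ℝ) (hlam : 0 ≤ lam)
    (U : ℕ → ℝ) (hU0 : ∀ n, 0 ≤ U n) (hUmono : Monotone U)
    (Δ₀ : ℕ) (hΔ₀ : 1 ≤ Δ₀) (δ : ℕ → Bool) :
    (∀ m : ℕ, 1 ≤ m →
      (m : ℝ) * (⨅ η : ℕ+, ((∑ ℓ ∈ Finset.Icc 1 (η : ℕ), U ℓ) + lam) / (η : ℝ)) - lam ≤
        ∑ k ∈ Finset.range m,
          (U (aoiTraj Δ₀ δ k) + lam * (if δ k then 1 else 0))) ∧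
    ((⨅ η : ℕ+, ((∑ ℓ ∈ Finset.Icc 1 (η : ℕ), U ℓ) + lam) / (η : ℝ) : ℝ) : EReal) ≤
      atTop.liminf (fun m : ℕ =>
        (((∑ k ∈ Finset.range m,
            (U (aoiTraj Δ₀ δ k) + lam * (if δ k then 1 else 0))) / m : ℝ) : EReal)) := by
  have hm := cost_ge_of_cycle_bound lam U hUmono Δ₀ hΔ₀ δ _ (mul_iInf_cycle_le lam hlam U hU0)
  refine ⟨fun m _ => hm m, ?_⟩
  set g : ℝ := ⨅ η : ℕ+, ((∑ ℓ ∈ Finset.Icc 1 (η : ℕ), U ℓ) + lam) / (η : ℝ)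
  have hlim : Tendsto (fun m : ℕ => ((g - lam / m : ℝ) : EReal)) atTop (nhds (g : EReal)) := by
    refine (continuous_coe_real_ereal.tendsto g).comp ?_
    simpa using (tendsto_const_div_atTop_nhds_zero_nat lam).const_sub g
  rw [← hlim.liminf_eq]
  refine liminf_le_liminf ?_
  filter_upwards [eventually_gt_atTop 0] with m hpos
  have hpos' : (0 : ℝ) < m := by exact_mod_cast hpos
  rw [EReal.coe_le_coe_iff, le_div_iff₀ hpos', sub_mul, div_mul_cancel₀ _ hpos'.ne', mul_comm]
  exact hm m
end
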